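/- For integers $p, q \geq 0$ and real $t$, the height-one interpolated multiple zeta value has the double-integral expression $\zeta^t(\{1\}^p, q+2) = \frac{1}{p!\,q!} \int_{0<u_1<u_2<1} \left(\log\frac{1-u_1}{1-u_2} + t\log\frac{u_2}{u_1}\right)^p \left(\log\frac{1}{u_2}\right)^q \frac{du_1\,du_2}{(1-u_1)u_2}$. -/

import Mathlib

open scoped BigOperators
open MeasureTheory

/-- Multiple zeta value for an index given as a list. -/
noncomputable def mzvL (k : List ℕ) : ℝ :=
  ∑' m : {f : Fin k.length → ℕ+ // StrictMono f},
    ∏ i, (1 : ℝ) / (((m.1 i : ℕ+) : ℕ) : ℝ) ^ (k.get i)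

/-- Multiple zeta-star value for an index given as a list. -/
noncomputable def zetaStarL (k : List ℕ) : ℝ :=
  ∑' m : {f : Fin k.length → ℕ+ // Monotone f},
    ∏ i, (1 : ℝ) / (((m.1 i : ℕ+) : ℕ) : ℝ) ^ (k.get i)

/-- Riemann zeta at a natural number argument. -/
noncomputable def rz (s : ℕ) : ℝ := ∑' n : ℕ+, (1 : ℝ) / ((n : ℕ) : ℝ) ^ s

/-- Multiple polylogarithm (single variable). -/
noncomputable def LiL (k : List ℕ) (z : ℝ) : ℝ :=
  ∑' m : {f : Fin k.length → ℕ+ // StrictMono f},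
    z ^ (if h : 0 < k.length then ((m.1 ⟨k.length - 1, Nat.sub_lt h Nat.one_pos⟩ : ℕ+) : ℕ) else 0)
      / ∏ i, (((m.1 i : ℕ+) : ℕ) : ℝ) ^ (k.get i)

/-- Arakawa-Kaneko multiple zeta function. -/
noncomputable def xiL (k : List ℕ) (s : ℝ) : ℝ :=
  (1 / Real.Gamma s) *
    ∫ t in Set.Ioi (0 : ℝ), t ^ (s - 1) / (Real.exp t - 1) * LiL k (1 - Real.exp (-t))

/-- All indices obtained from `k` by filling each box with a comma or a plus. -/
def fills : List ℕ → List (List ℕ)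
  | [] => [[]]
  | [a] => [[a]]
  | a :: b :: rest => ((fills (b :: rest)).map (a :: ·)) ++ fills ((a + b) :: rest)
termination_by l => l.length

/-- Interpolated multiple zeta value (t-MZV). -/
noncomputable def zetaT (t : ℝ) (k : List ℕ) : ℝ :=
  ((fills k).map (fun k' => t ^ (k.length - k'.length) * mzvL k')).sum

/-- t-Arakawa-Kaneko multiple zeta value. -/
noncomputable def xiT (t : ℝ) (k : List ℕ) (s : ℝ) : ℝ :=
  ((fills k).map (fun k' => t ^ (k.length - k'.length) * xiL k' s)).sum

section helpers
open scoped ENNReal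
open Set

noncomputable def rr (n : ℕ) : ℝ≥0∞ := ENNReal.ofReal ((n : ℝ)⁻¹)

lemma rr_zero : rr 0 = 0 := by simp [rr]

lemma rr_le_one (n : ℕ) : rr n ≤ 1 := by
  unfold rr
  rw [ENNReal.ofReal_le_one]
  exact Nat.cast_inv_le_one n

noncomputable def opA (T : ℝ≥0∞) (c : ℕ → ℝ≥0∞) (m : ℕ) : ℝ≥0∞ :=
  rr m * ((∑' n, if n < m then c n else 0) + T * c m)

noncomputable def opB (T : ℝ≥0∞) (g : ℕ → ℝ≥0∞) (n : ℕ) : ℝ≥0∞ :=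
  (∑' m, if n < m then rr m * g m else 0) + T * (rr n * g n)

lemma duality (T : ℝ≥0∞) (c g : ℕ → ℝ≥0∞) :
    ∑' n, c n * opB T g n = ∑' m, opA T c m * g m := by
  unfold opA opB
  simp only [mul_add, add_mul, ENNReal.tsum_add]
  congr 1
  · simp only [← ENNReal.tsum_mul_left, ← ENNReal.tsum_mul_right]
    rw [ENNReal.tsum_comm]
    refine tsum_congr fun m => tsum_congr fun n => ?_
    split_ifs <;> ring
  · refine tsum_congr fun m => ?_
    ring

noncomputable def SS : List ℕ → ℕ → ℝ≥0∞
  | [], _ => 1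
  | a :: k, N => ∑' n, if N < n then rr n ^ a * SS k n else 0

noncomputable def UU (T : ℝ≥0∞) : List ℕ → ℕ → ℝ≥0∞
  | [], _ => 1
  | b :: k, n => (∑' m, if n < m then rr m ^ b * UU T k m else 0) + T * (rr n ^ b * UU T k n)

noncomputable def zS (T : ℝ≥0∞) (l : List ℕ) (N : ℕ) : ℝ≥0∞ :=
  ((fills l).map fun k' => T ^ (l.length - k'.length) * SS k' N).sum

lemma fills_len : ∀ (n : ℕ) (l : List ℕ), l.length = n → ∀ k ∈ fills l, k.length ≤ l.length := by
  intro n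
  induction n with
  | zero =>
    intro l hl k hk
    rw [List.length_eq_zero_iff] at hl
    subst hl
    simp [fills] at hk
    simp [hk]
  | succ n ih =>
    intro l hl k hk
    match l, hl, hk with
    | [a], _, hk =>
      simp [fills] at hk
      simp [hk]
    | a :: b :: rest, hl, hk =>
      rw [fills] at hk
      simp only [List.mem_append, List.mem_map] at hk
      simp only [List.length_cons] at hl
      rcases hk with ⟨k', hk', rfl⟩ | hk
      · have := ih (b :: rest) (by simp; omega) k' hk'
        simpa using this
      · have := ih ((a+b) :: rest) (by simp; omega) k hk
        simp at this ⊢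
        omega

lemma list_tsum {α : Type*} (l : List α) (f : α → ℕ → ℝ≥0∞) :
    (l.map fun x => ∑' n, f x n).sum = ∑' n, (l.map fun x => f x n).sum := by
  induction l with
  | nil => simp
  | cons x l ih => simp [ih, ENNReal.tsum_add]

lemma zS_cons (T : ℝ≥0∞) (l : List ℕ) : ∀ (a N : ℕ),
    zS T (a :: l) N = ∑' n, if N < n then rr n ^ a * UU T l n else 0 := by
  induction l with
  | nil => intro a N; simp [zS, fills, SS, UU]
  | cons b rest ih =>
    intro a N
    have h1 : zS T (a :: b :: rest) N =
        (∑' n, if N < n then rr n ^ a * zS T (b :: rest) n else 0)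
          + T * zS T ((a + b) :: rest) N := by
      unfold zS
      rw [fills, List.map_append, List.sum_append, List.map_map]
      congr 1
      · have : ∀ n, (if N < n then rr n ^ a * (List.map (fun k' => T ^ ((b :: rest).length - k'.length) * SS k' n) (fills (b :: rest))).sum else 0) = (List.map (fun k' => if N < n then rr n ^ a * (T ^ ((b :: rest).length - k'.length) * SS k' n) else 0) (fills (b :: rest))).sum := by
          intro n
          split_ifs
          · rw [List.sum_map_mul_left]
          · simp
        simp only [this]
        rw [← list_tsum]
        congr 1
        refine List.map_congr_left fun k' _ => ?_
        simp only [Function.comp, SS, List.length_cons, Nat.add_sub_add_right]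
        rw [← ENNReal.tsum_mul_left]
        refine tsum_congr fun n => ?_
        split_ifs
        · ring
        · simp
      · rw [← List.sum_map_mul_left]
        congr 1
        refine List.map_congr_left fun k' hk' => ?_
        have := fills_len _ _ rfl k' hk'
        simp only [List.length_cons] at this ⊢
        rw [show rest.length + 1 + 1 - k'.length = (rest.length + 1 - k'.length) + 1 by omega]
        ring
    rw [h1, ih (a+b) N, ← ENNReal.tsum_mul_left, ← ENNReal.tsum_add]
    refine tsum_congr fun n => ?_
    rw [ih b n, UU]
    split_ifs
    · ring
    · simp

lemma UU_rep (T : ℝ≥0∞) (p q : ℕ) : ∀ c : ℕ → ℝ≥0∞,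
    ∑' n, c n * UU T (List.replicate p 1 ++ [q+2]) n
      = ∑' n, ((opA T)^[p+1] c) n * rr n ^ (q+1) := by
  induction p with
  | zero =>
    intro c
    rw [Function.iterate_one, ← duality]
    refine tsum_congr fun n => ?_
    simp only [List.replicate_zero, List.nil_append, UU, opB, mul_one, ← pow_succ']
  | succ p ih =>
    intro c
    rw [Function.iterate_succ_apply, ← ih, ← duality]
    refine tsum_congr fun n => ?_
    simp only [List.replicate_succ, List.cons_append, UU, opB, pow_one]

lemma zS_rep (T : ℝ≥0∞) (p q : ℕ) :
    zS T (List.replicate p 1 ++ [q+2]) 0 = ∑' n, ((opA T)^[p] rr) n * rr n ^ (q+1) := by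
  cases p with
  | zero =>
    rw [List.replicate_zero, List.nil_append, zS_cons]
    refine tsum_congr fun n => ?_
    rcases Nat.eq_zero_or_pos n with rfl | h
    · simp [rr_zero]
    · simp [h, UU, ← pow_succ']
  | succ p =>
    rw [List.replicate_succ, List.cons_append, zS_cons, ← UU_rep]
    refine tsum_congr fun n => ?_
    rcases Nat.eq_zero_or_pos n with rfl | h
    · simp [rr_zero]
    · simp [h]

/- finiteness -/
noncomputable def ss (n : ℕ) : ℝ≥0∞ := ENNReal.ofReal ((√(n : ℝ))⁻¹)

lemma sum_sqrt (m : ℕ) : ∑ n ∈ Finset.range (m+1), (√(n : ℝ))⁻¹ ≤ 2 * √(m : ℝ) := by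
  induction m with
  | zero => simp
  | succ m ih =>
    rw [Finset.sum_range_succ]
    have h0 : 0 < √((m+1 : ℕ) : ℝ) := Real.sqrt_pos.2 (by positivity)
    have h1 : (√((m+1 : ℕ) : ℝ))^2 = m + 1 := by rw [Real.sq_sqrt (by positivity)]; push_cast; ring
    have h2 : (√(m : ℝ))^2 = m := Real.sq_sqrt (by positivity)
    have h3 : (√((m+1 : ℕ) : ℝ))⁻¹ ≤ 2 * √((m+1 : ℕ) : ℝ) - 2 * √(m : ℝ) := by
      rw [inv_le_iff_one_le_mul₀ h0]
      nlinarith [sq_nonneg (√((m+1 : ℕ) : ℝ) - √(m : ℝ))]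
    linarith

lemma rr_le_ss (m : ℕ) : rr m ≤ ss m := by
  unfold rr ss
  apply ENNReal.ofReal_le_ofReal
  rcases Nat.eq_zero_or_pos m with rfl | h
  · simp
  · have : (1:ℝ) ≤ m := by exact_mod_cast h
    apply inv_anti₀ (Real.sqrt_pos.2 (by linarith))
    rw [Real.sqrt_le_left (by linarith)]
    nlinarith

lemma rr_sum_ss (m : ℕ) : rr m * (∑' n, if n < m then ss n else 0) ≤ 2 * ss m := by
  cases m with
  | zero => simp [rr_zero]
  | succ m =>
    rw [tsum_eq_sum (s := Finset.range (m+1)) (by intro b hb; simp at hb; simp; omega)]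
    rw [Finset.sum_congr rfl (g := ss) (by intro x hx; simp at hx; simp [hx])]
    unfold ss rr
    rw [← ENNReal.ofReal_sum_of_nonneg (by intros; positivity), ← ENNReal.ofReal_mul (by positivity),
      show (2 : ℝ≥0∞) = ENNReal.ofReal 2 by simp, ← ENNReal.ofReal_mul (by positivity)]
    apply ENNReal.ofReal_le_ofReal
    have h0 : 0 < √((m+1 : ℕ) : ℝ) := Real.sqrt_pos.2 (by positivity)
    have h1 : ((m+1 : ℕ) : ℝ) = √((m+1 : ℕ) : ℝ) * √((m+1 : ℕ) : ℝ) := (Real.mul_self_sqrt (by positivity)).symm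
    have h2 : √(m : ℝ) ≤ √((m+1 : ℕ) : ℝ) := Real.sqrt_le_sqrt (by push_cast; linarith)
    calc _ ≤ ((m+1 : ℕ) : ℝ)⁻¹ * (2 * √((m+1 : ℕ) : ℝ)) := by
          gcongr
          exact (sum_sqrt m).trans (by linarith)
      _ = _ := by
          nth_rewrite 1 [h1]
          field_simp

lemma c_bound (T : ℝ≥0∞) (hT : T ≠ ⊤) (p : ℕ) :
    ∃ K : ℝ≥0∞, K ≠ ⊤ ∧ ∀ m, ((opA T)^[p] rr) m ≤ K * ss m := by
  induction p with
  | zero => exact ⟨1, by simp, fun m => by simpa using rr_le_ss m⟩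
  | succ p ih =>
    obtain ⟨K, hK, h⟩ := ih
    refine ⟨2 * K + T * K, by finiteness, fun m => ?_⟩
    rw [Function.iterate_succ_apply']
    set c := (opA T)^[p] rr
    unfold opA
    calc _ ≤ rr m * ((∑' n, if n < m then K * ss n else 0) + T * (K * ss m)) := by
          gcongr with n
          · split_ifs
            · exact h n
            · simp
          · exact h m
      _ = K * (rr m * (∑' n, if n < m then ss n else 0)) + rr m * (T * K * ss m) := by
          have : ∀ n, (if n < m then K * ss n else 0) = K * (if n < m then ss n else 0) := by
            intro n; split_ifs <;> simp
          simp only [this, ENNReal.tsum_mul_left]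
          ring
      _ ≤ K * (2 * ss m) + 1 * (T * K * ss m) := by
          exact add_le_add (mul_le_mul_right (rr_sum_ss m) K) (mul_le_mul_left (rr_le_one m) _)
      _ = _ := by ring

lemma total_fin (T : ℝ≥0∞) (hT : T ≠ ⊤) (p q : ℕ) :
    ∑' n, ((opA T)^[p] rr) n * rr n ^ (q+1) ≠ ⊤ := by
  obtain ⟨K, hK, h⟩ := c_bound T hT p
  have h1 : ∑' n, ((opA T)^[p] rr) n * rr n ^ (q+1) ≤ ∑' n : ℕ, K * (ENNReal.ofReal (1 / (n:ℝ)^(3/2:ℝ))) := by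
    refine ENNReal.tsum_le_tsum fun n => ?_
    calc _ ≤ (K * ss n) * (1 * rr n) := by
          rw [pow_succ]
          gcongr
          · exact h n
          · exact pow_le_one' (rr_le_one n) q
      _ = K * (ss n * rr n) := by ring
      _ ≤ _ := by
          gcongr
          unfold ss rr
          rw [← ENNReal.ofReal_mul (by positivity)]
          apply ENNReal.ofReal_le_ofReal
          rcases Nat.eq_zero_or_pos n with rfl | hn
          · simp
          · have : (0:ℝ) < n := by exact_mod_cast hn
            rw [Real.sqrt_eq_rpow, ← mul_inv, one_div ((n:ℝ) ^ _), show (3/2:ℝ) = 1/2 + 1 by norm_num, Real.rpow_add this, Real.rpow_one]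
  refine ne_top_of_le_ne_top ?_ h1
  rw [ENNReal.tsum_mul_left]
  refine ENNReal.mul_ne_top hK ?_
  have hs : Summable (fun n : ℕ => 1 / (n:ℝ)^(3/2:ℝ)) := Real.summable_one_div_nat_rpow.2 (by norm_num)
  exact hs.tsum_ofReal_ne_top

/- mzvL -/
lemma strictMono_cons_iff {n : ℕ} (a : ℕ+) (f : Fin n → ℕ+) :
    StrictMono (Fin.cons a f : Fin (n+1) → ℕ+) ↔ (∀ i, a < f i) ∧ StrictMono f := by
  constructor
  · intro h
    refine ⟨fun i => ?_, fun i j hij => ?_⟩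
    · simpa using h (Fin.succ_pos i)
    · simpa using h (Fin.succ_lt_succ_iff.2 hij)
  · rintro ⟨h1, h2⟩ i j hij
    induction i using Fin.cases with
    | zero =>
      induction j using Fin.cases with
      | zero => simp at hij
      | succ j => simpa using h1 j
    | succ i =>
      induction j using Fin.cases with
      | zero => simp at hij
      | succ j => simpa using h2 (Fin.succ_lt_succ_iff.1 hij)

open Classical in
lemma SS_eq (k : List ℕ) : ∀ N : ℕ,
    SS k N = ∑' f : Fin k.length → ℕ+, if StrictMono f ∧ ∀ i, N < (f i : ℕ) then
      ∏ i, rr (f i) ^ (k.get i) else 0 := by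
  induction k with
  | nil =>
    intro N
    rw [tsum_eq_single (fun i => i.elim0) (by intro b hb; exact absurd (funext fun i => i.elim0) hb)]
    rw [if_pos ⟨fun i => i.elim0, fun i => i.elim0⟩]
    simp [SS]
  | cons a k ih =>
    intro N
    have e := (Fin.consEquiv (fun _ : Fin (k.length + 1) => ℕ+)).tsum_eq
      (fun f : Fin (k.length+1) → ℕ+ => if StrictMono f ∧ ∀ i, N < (f i : ℕ) then
      ∏ i, rr (f i) ^ ((a :: k).get i) else 0)
    refine Eq.trans ?_ e
    rw [ENNReal.tsum_prod', SS]
    have h0 : ∀ g : ℕ → ℝ≥0∞, g 0 = 0 → ∑' n, g n = ∑' n : ℕ+, g n := by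
      intro g hg
      rw [tsum_pnat_eq_tsum_succ (f := g), tsum_eq_zero_add' ENNReal.summable, hg, zero_add]
    rw [h0 _ (by simp)]
    refine tsum_congr fun n => ?_
    rw [ih n]
    have : ∀ f : Fin k.length → ℕ+, (StrictMono (Fin.cons n f : Fin (k.length+1) → ℕ+) ∧ (∀ i, N < (((Fin.cons n f : Fin (k.length+1) → ℕ+) i : ℕ+) : ℕ))) ↔ (N < n ∧ (StrictMono f ∧ ∀ i, (n:ℕ) < f i)) := by
      intro f
      rw [strictMono_cons_iff, Fin.forall_fin_succ]
      simp only [Fin.cons_zero, Fin.cons_succ, PNat.coe_lt_coe]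
      constructor
      · rintro ⟨⟨h1, h2⟩, h3, h4⟩
        exact ⟨h3, h2, h1⟩
      · rintro ⟨h3, h2, h1⟩
        exact ⟨⟨h1, h2⟩, h3, fun i => h3.trans (by exact_mod_cast h1 i)⟩
    have h5 : ∀ f : Fin k.length → ℕ+, (Fin.consEquiv (fun _ : Fin (k.length + 1) => ℕ+)) (n, f) = (Fin.cons n f : Fin (k.length+1) → ℕ+) := fun f => rfl
    simp only [h5, this]
    by_cases hN : N < n
    · simp only [hN, if_true, true_and]
      rw [← ENNReal.tsum_mul_left]
      refine tsum_congr fun f => ?_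
      split_ifs
      · refine Eq.trans ?_ (Fin.prod_univ_succ (n := k.length) _).symm
        simp
      · simp
    · simp [hN]

lemma mzvL_eq (k : List ℕ) : mzvL k = (SS k 0).toReal := by
  classical
  rw [SS_eq, mzvL]
  have h1 : ∀ f : Fin k.length → ℕ+, (if StrictMono f ∧ ∀ i, 0 < (f i : ℕ) then
      ∏ i, rr (f i) ^ (k.get i) else 0) = Set.indicator {f : Fin k.length → ℕ+ | StrictMono f}
        (fun f => ∏ i, rr (f i) ^ (k.get i)) f := by
    intro f
    simp [Set.indicator_apply]
  simp only [h1]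
  rw [← tsum_subtype, ENNReal.tsum_toReal_eq]
  · refine tsum_congr fun f => ?_
    rw [ENNReal.toReal_prod]
    refine Finset.prod_congr rfl fun i _ => ?_
    rw [ENNReal.toReal_pow, rr, ENNReal.toReal_ofReal (by positivity)]
    simp
  · intro f
    refine ENNReal.prod_ne_top fun i _ => ?_
    refine ENNReal.pow_ne_top ?_
    simp [rr]

lemma list_toReal {α : Type*} (l : List α) (f : α → ℝ≥0∞) (h : (l.map f).sum ≠ ⊤) :
    (l.map f).sum.toReal = (l.map fun x => (f x).toReal).sum := by
  induction l with
  | nil => simp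
  | cons x l ih =>
    simp only [List.map_cons, List.sum_cons] at h ⊢
    have := ENNReal.add_ne_top.1 h
    rw [ENNReal.toReal_add this.1 this.2, ih this.2]

lemma zetaT_eq (t : ℝ) (ht : 0 < t) (p q : ℕ) :
    zetaT t (List.replicate p 1 ++ [q + 2]) =
      (∑' n, ((opA (ENNReal.ofReal t))^[p] rr) n * rr n ^ (q+1)).toReal := by
  have hf := total_fin (ENNReal.ofReal t) (by simp) p q
  rw [← zS_rep] at hf ⊢
  unfold zS at hf ⊢
  rw [list_toReal _ _ hf, zetaT]
  congr 1
  refine List.map_congr_left fun k' _ => ?_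
  rw [ENNReal.toReal_mul, ENNReal.toReal_pow, ENNReal.toReal_ofReal ht.le, mzvL_eq]
end helpers
section helpers2
open scoped ENNReal
open Set

lemma lint_ftc (F f : ℝ → ℝ) (a b : ℝ) (hab : a ≤ b)
    (hd : ∀ x ∈ Icc a b, HasDerivAt F (f x) x) (hc : ContinuousOn f (Icc a b))
    (hn : ∀ x ∈ Ioo a b, 0 ≤ f x) :
    ∫⁻ x in Ioo a b, ENNReal.ofReal (f x) = ENNReal.ofReal (F b - F a) := by
  have hi : IntervalIntegrable f volume a b := by
    apply ContinuousOn.intervalIntegrable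
    rwa [uIcc_of_le hab]
  rw [← intervalIntegral.integral_eq_sub_of_hasDerivAt (f := F) (f' := f) (by rwa [uIcc_of_le hab]) hi,
    intervalIntegral.integral_of_le hab, integral_Ioc_eq_integral_Ioo]
  rw [ofReal_integral_eq_lintegral_ofReal]
  · exact ((intervalIntegrable_iff_integrableOn_Ioo_of_le hab).1 hi)
  · exact (ae_restrict_iff' measurableSet_Ioo).2 (Filter.Eventually.of_forall hn)

lemma tri_swap (f : ℝ → ℝ → ℝ≥0∞) (hf : Measurable (Function.uncurry f)) (v : ℝ) :
    ∫⁻ u in Ioo 0 v, ∫⁻ w in Ioo u v, f u w = ∫⁻ w in Ioo 0 v, ∫⁻ u in Ioo 0 w, f u w := by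
  have hm : MeasurableSet {z : ℝ × ℝ | 0 < z.1 ∧ z.1 < z.2 ∧ z.2 < v} := by
    apply IsOpen.measurableSet
    exact (isOpen_lt continuous_const continuous_fst).inter
      ((isOpen_lt continuous_fst continuous_snd).inter (isOpen_lt continuous_snd continuous_const))
  have h1 : ∫⁻ u in Ioo 0 v, ∫⁻ w in Ioo u v, f u w =
      ∫⁻ u, ∫⁻ w, {z : ℝ × ℝ | 0 < z.1 ∧ z.1 < z.2 ∧ z.2 < v}.indicator (Function.uncurry f) (u, w) := by
    rw [← lintegral_indicator measurableSet_Ioo]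
    refine lintegral_congr fun u => ?_
    rw [indicator_apply]
    split_ifs with hu
    · rw [← lintegral_indicator measurableSet_Ioo]
      refine lintegral_congr fun w => ?_
      simp only [indicator_apply, mem_Ioo, mem_ofPred_eq, Function.uncurry]
      simp [hu.1]
    · symm
      refine (lintegral_congr fun w => ?_).trans lintegral_zero
      simp only [mem_Ioo] at hu
      simp only [indicator_apply, mem_ofPred_eq]
      rw [if_neg]
      rintro ⟨h1, h2, h3⟩
      exact hu ⟨h1, h2.trans h3⟩
  have h2 : ∫⁻ w in Ioo 0 v, ∫⁻ u in Ioo 0 w, f u w =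
      ∫⁻ w, ∫⁻ u, {z : ℝ × ℝ | 0 < z.1 ∧ z.1 < z.2 ∧ z.2 < v}.indicator (Function.uncurry f) (u, w) := by
    rw [← lintegral_indicator measurableSet_Ioo]
    refine lintegral_congr fun w => ?_
    rw [indicator_apply]
    split_ifs with hw
    · rw [← lintegral_indicator measurableSet_Ioo]
      refine lintegral_congr fun u => ?_
      simp only [indicator_apply, mem_Ioo, mem_ofPred_eq, Function.uncurry]
      simp [hw.2]
    · symm
      refine (lintegral_congr fun u => ?_).trans lintegral_zero
      simp only [mem_Ioo] at hw
      simp only [indicator_apply, mem_ofPred_eq]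
      rw [if_neg]
      rintro ⟨h1, h2, h3⟩
      exact hw ⟨h1.trans h2, h3⟩
  rw [h1, h2]
  exact lintegral_lintegral_swap (hf.indicator hm).aemeasurable

noncomputable def phi (t u v : ℝ) : ℝ := Real.log ((1 - u) / (1 - v)) + t * Real.log (v / u)

lemma phi_meas (t : ℝ) : Measurable (fun z : ℝ × ℝ => phi t z.1 z.2) := by
  unfold phi; fun_prop

lemma phi_nonneg {t u v : ℝ} (ht : 0 ≤ t) (hu : 0 < u) (huv : u ≤ v) (hv : v < 1) : 0 ≤ phi t u v := by
  unfold phi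
  have h1 : 0 ≤ Real.log ((1 - u) / (1 - v)) := by
    apply Real.log_nonneg
    rw [le_div_iff₀ (by linarith)]; linarith
  have h2 : 0 ≤ Real.log (v / u) := by
    apply Real.log_nonneg
    rw [le_div_iff₀ (by linarith)]; linarith
  positivity

lemma phi_self {t u : ℝ} (hu : 0 < u) (hu1 : u < 1) : phi t u u = 0 := by
  unfold phi
  rw [div_self (by linarith), div_self (by linarith)]; simp

lemma phi_deriv (t : ℝ) {u v : ℝ} (hu : 0 < u) (hu1 : u < 1) (hv0 : 0 < v) (hv : v < 1) :
    HasDerivAt (fun v => phi t u v) (1 / (1 - v) + t / v) v := by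
  unfold phi
  have a1 : (1 - u) ≠ 0 := by linarith
  have a2 : (1 - v) ≠ 0 := by linarith
  have h1 : HasDerivAt (fun v : ℝ => (1 - u) / (1 - v)) (((0:ℝ) * (1 - v) - (1-u) * (-1)) / (1-v)^2) v :=
    (hasDerivAt_const v (1-u)).div ((hasDerivAt_id v).const_sub 1) a2
  have h2 := h1.log (div_ne_zero a1 a2)
  have h3 : HasDerivAt (fun v : ℝ => v / u) (1 / u) v := (hasDerivAt_id v).div_const u
  have h4 := (h3.log (by positivity)).const_mul t
  refine HasDerivAt.congr_deriv (h2.add h4) ?_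
  field_simp
  ring

lemma phi_ftc {t u v : ℝ} (ht : 0 ≤ t) (hu : 0 < u) (huv : u < v) (hv : v < 1) (p : ℕ) :
    ∫⁻ w in Ioo u v, ENNReal.ofReal (phi t u w ^ p / p.factorial * (1 / (1 - w) + t / w))
      = ENNReal.ofReal (phi t u v ^ (p+1) / (p+1).factorial) := by
  have hd : ∀ x ∈ Icc u v, HasDerivAt (fun w => phi t u w) (1 / (1 - x) + t / x) x := fun x hx =>
    phi_deriv t hu (by linarith) (by linarith [hx.1]) (by linarith [hx.2])
  rw [lint_ftc (fun w => phi t u w ^ (p+1) / (p+1).factorial) _ u v huv.le]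
  · simp [phi_self hu (huv.trans hv)]
  · intro x hx
    refine HasDerivAt.congr_deriv (((hd x hx).pow (p+1)).div_const ((p+1).factorial : ℝ)) ?_
    rw [Nat.factorial_succ]
    push_cast
    have : (p.factorial : ℝ) ≠ 0 := by positivity
    field_simp
  · have hc : ContinuousOn (fun w => phi t u w) (Icc u v) := fun x hx => (hd x hx).continuousAt.continuousWithinAt
    refine ((hc.pow p).div_const _).mul (ContinuousOn.add ?_ ?_)
    · exact continuousOn_const.div (by fun_prop) (fun x hx => by linarith [hx.2])
    · exact continuousOn_const.div (by fun_prop) (fun x hx => by linarith [hx.1])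
  · intro x hx
    have h1 := phi_nonneg ht hu hx.1.le (hx.2.trans hv)
    have h2 : 0 < 1 - x := by linarith [hx.2]
    have h3 : 0 < x := by linarith [hx.1]
    positivity

lemma int_pow (k : ℕ) {v : ℝ} (hv : 0 ≤ v) :
    ∫⁻ w in Ioo 0 v, ENNReal.ofReal (w ^ k) = rr (k+1) * ENNReal.ofReal (v ^ (k+1)) := by
  rw [lint_ftc (fun w => w ^ (k+1) / (k+1)) _ 0 v hv]
  · rw [rr, ← ENNReal.ofReal_mul (by positivity)]
    congr 1
    push_cast
    field_simp
    simp
  · intro x hx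
    refine HasDerivAt.congr_deriv ((hasDerivAt_pow (k+1) x).div_const ((k:ℝ)+1)) ?_
    push_cast
    field_simp
  · fun_prop
  · intro x hx
    have := hx.1
    positivity

lemma int_geom (n : ℕ) {v : ℝ} (hv : 0 ≤ v) (hv1 : v < 1) :
    ∫⁻ w in Ioo 0 v, ENNReal.ofReal (w ^ n * (1 / (1 - w))) =
      ∑' m, if n < m then rr m * ENNReal.ofReal (v ^ m) else 0 := by
  have h1 : ∀ w ∈ Ioo 0 v, ENNReal.ofReal (w ^ n * (1 / (1 - w))) =
      ∑' k : ℕ, ENNReal.ofReal (w ^ (n + k)) := by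
    intro w hw
    have h0 := hw.1.le
    have h1 : w < 1 := hw.2.trans hv1
    have hs : HasSum (fun k : ℕ => w ^ (n + k)) (w ^ n * (1 / (1 - w))) := by
      simp only [pow_add, one_div]
      exact (hasSum_geometric_of_lt_one h0 h1).mul_left _
    rw [← ENNReal.ofReal_tsum_of_nonneg (fun k => by positivity) hs.summable, hs.tsum_eq]
  rw [setLIntegral_congr_fun measurableSet_Ioo h1, lintegral_tsum (fun k => by fun_prop)]
  simp only [int_pow _ hv]
  have hinj : Function.Injective (fun k : ℕ => n + k + 1) := by intro a b h; simpa using h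
  rw [← hinj.tsum_eq (f := fun m => if n < m then rr m * ENNReal.ofReal (v ^ m) else 0)]
  · refine tsum_congr fun k => ?_
    rw [if_pos (by omega)]
  · intro m hm
    simp only [Function.mem_support, ne_eq, ite_eq_right_iff, Classical.not_imp] at hm
    exact ⟨m - n - 1, by have := hm.1; simp; omega⟩

lemma c_zero (T : ℝ≥0∞) (p : ℕ) : ((opA T)^[p] rr) 0 = 0 := by
  cases p with
  | zero => simp [rr_zero]
  | succ p => rw [Function.iterate_succ_apply']; simp [opA, rr_zero]

lemma inner_series {t : ℝ} (ht : 0 ≤ t) (p : ℕ) : ∀ v ∈ Ioo (0:ℝ) 1,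
    ∫⁻ u in Ioo 0 v, ENNReal.ofReal (1 / (1 - u)) * ENNReal.ofReal (phi t u v ^ p / p.factorial)
      = ∑' n, ((opA (ENNReal.ofReal t))^[p] rr) n * ENNReal.ofReal (v ^ n) := by
  induction p with
  | zero =>
    intro v hv
    have := int_geom 0 hv.1.le hv.2
    simp only [pow_zero, one_mul] at this
    simp only [pow_zero, Nat.factorial_zero, Nat.cast_one, div_one, ENNReal.ofReal_one, mul_one,
      Function.iterate_zero, id]
    rw [this]
    refine tsum_congr fun n => ?_
    rcases Nat.eq_zero_or_pos n with rfl | h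
    · simp [rr_zero]
    · simp [h]
  | succ p ih =>
    intro v hv
    have e1 : ∀ u ∈ Ioo 0 v, ENNReal.ofReal (1 / (1 - u)) * ENNReal.ofReal (phi t u v ^ (p+1) / (p+1).factorial)
        = ∫⁻ w in Ioo u v, ENNReal.ofReal (1 / (1 - w) + t / w) * (ENNReal.ofReal (1 / (1 - u)) * ENNReal.ofReal (phi t u w ^ p / p.factorial)) := by
      intro u hu
      rw [← phi_ftc ht hu.1 hu.2 hv.2, ← lintegral_const_mul']
      · refine setLIntegral_congr_fun measurableSet_Ioo fun w hw => ?_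
        have := phi_nonneg ht hu.1 hw.1.le (hw.2.trans hv.2)
        rw [ENNReal.ofReal_mul (by positivity)]
        ring
      · simp
    rw [setLIntegral_congr_fun measurableSet_Ioo e1]
    rw [tri_swap (fun u w => ENNReal.ofReal (1 / (1 - w) + t / w) * (ENNReal.ofReal (1 / (1 - u)) * ENNReal.ofReal (phi t u w ^ p / p.factorial)))]
    swap
    · have := phi_meas t
      simp only [Function.uncurry_def]
      fun_prop
    set c := (opA (ENNReal.ofReal t))^[p] rr with hc
    have e2 : ∀ w ∈ Ioo 0 v, ∫⁻ u in Ioo 0 w, ENNReal.ofReal (1 / (1 - w) + t / w) * (ENNReal.ofReal (1 / (1 - u)) * ENNReal.ofReal (phi t u w ^ p / p.factorial))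
        = ∑' n, c n * (ENNReal.ofReal (w ^ n * (1 / (1 - w))) + ENNReal.ofReal t * ENNReal.ofReal (w ^ (n - 1))) := by
      intro w hw
      have hw0 := hw.1
      have hw1 : 0 < 1 - w := by linarith [hw.2, hv.2]
      rw [lintegral_const_mul' _ _ (by simp), ih w ⟨hw.1, hw.2.trans hv.2⟩, ← ENNReal.tsum_mul_left]
      refine tsum_congr fun n => ?_
      rcases Nat.eq_zero_or_pos n with rfl | h
      · simp [hc, c_zero]
      · rw [← ENNReal.ofReal_mul ht, ← ENNReal.ofReal_add (by positivity) (by positivity), mul_left_comm,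
          ← ENNReal.ofReal_mul (by positivity)]
        congr 2
        obtain ⟨m, rfl⟩ : ∃ m, n = m + 1 := ⟨n - 1, by omega⟩
        simp only [Nat.add_sub_cancel]
        field_simp
        ring
    rw [setLIntegral_congr_fun measurableSet_Ioo e2, lintegral_tsum (fun k => by fun_prop),
      Function.iterate_succ_apply', ← hc, ← duality]
    refine tsum_congr fun n => ?_
    rcases Nat.eq_zero_or_pos n with rfl | h
    · simp [hc, c_zero]
    rw [lintegral_const_mul _ (by fun_prop), lintegral_add_left (by fun_prop),
      lintegral_const_mul _ (by fun_prop), int_geom n hv.1.le hv.2, int_pow _ hv.1.le, opB,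
      Nat.sub_add_cancel h]

lemma log_int (q : ℕ) : ∀ n : ℕ,
    ∫⁻ v in Ioo (0:ℝ) 1, ENNReal.ofReal (v ^ n) * ENNReal.ofReal (Real.log (1 / v) ^ q / q.factorial)
      = rr (n+1) ^ (q+1) := by
  induction q with
  | zero =>
    intro n
    simpa using int_pow n zero_le_one
  | succ q ih =>
    intro n
    have hL : ∀ v ∈ Ioo (0:ℝ) 1, 0 ≤ Real.log (1 / v) := fun v hv =>
      Real.log_nonneg (by rw [le_div_iff₀ hv.1]; linarith [hv.2])
    have e1 : ∀ v ∈ Ioo (0:ℝ) 1, ENNReal.ofReal (v ^ n) * ENNReal.ofReal (Real.log (1 / v) ^ (q+1) / (q+1).factorial)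
        = ∫⁻ w in Ioo v 1, ENNReal.ofReal (v ^ n) * ENNReal.ofReal (Real.log (1 / w) ^ q / q.factorial * (1 / w)) := by
      intro v hv
      rw [lintegral_const_mul' _ _ (by simp)]
      congr 1
      have hd : ∀ x ∈ Icc v 1, HasDerivAt (fun w : ℝ => Real.log (1 / w)) (- (1 / x)) x := by
        intro x hx
        have hx0 : x ≠ 0 := by linarith [hx.1, hv.1]
        simp only [one_div, Real.log_inv]
        exact (Real.hasDerivAt_log hx0).neg
      rw [lint_ftc (fun w => - (Real.log (1 / w) ^ (q+1) / (q+1).factorial)) _ v 1 hv.2.le]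
      · simp
      · intro x hx
        refine HasDerivAt.congr_deriv ((((hd x hx).pow (q+1)).div_const ((q+1).factorial : ℝ)).neg) ?_
        rw [Nat.factorial_succ]
        push_cast
        have : (q.factorial : ℝ) ≠ 0 := by positivity
        field_simp
      · have hc : ContinuousOn (fun w : ℝ => Real.log (1 / w)) (Icc v 1) := fun x hx => (hd x hx).continuousAt.continuousWithinAt
        refine ((hc.pow q).div_const _).mul ?_
        exact continuousOn_const.div (by fun_prop) (fun x hx => by linarith [hx.1, hv.1])
      · intro x hx
        have h0 : 0 < x := hv.1.trans hx.1
        have := hL x ⟨h0, hx.2⟩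
        positivity
    rw [setLIntegral_congr_fun measurableSet_Ioo e1, tri_swap
      (fun v w => ENNReal.ofReal (v ^ n) * ENNReal.ofReal (Real.log (1 / w) ^ q / q.factorial * (1 / w)))]
    swap
    · simp only [Function.uncurry_def]; fun_prop
    rw [pow_succ', ← ih n, ← lintegral_const_mul _ (by fun_prop)]
    refine setLIntegral_congr_fun measurableSet_Ioo fun w hw => ?_
    have := hL w hw
    have := hw.1
    rw [lintegral_mul_const _ (by fun_prop), int_pow _ hw.1.le, mul_assoc, ← ENNReal.ofReal_mul (by positivity), ← ENNReal.ofReal_mul (by positivity)]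
    congr 2
    field_simp
    ring

def tri : Set (ℝ × ℝ) := {u : ℝ × ℝ | 0 < u.1 ∧ u.1 < u.2 ∧ u.2 < 1}

lemma tri_meas : MeasurableSet tri := by
  apply IsOpen.measurableSet
  exact (isOpen_lt continuous_const continuous_fst).inter
      ((isOpen_lt continuous_fst continuous_snd).inter (isOpen_lt continuous_snd continuous_const))

lemma tri_lint (f : ℝ → ℝ → ℝ≥0∞) (hf : Measurable (Function.uncurry f)) :
    ∫⁻ z in tri, f z.1 z.2 = ∫⁻ v in Ioo 0 1, ∫⁻ u in Ioo 0 v, f u v := by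
  rw [← lintegral_indicator tri_meas, Measure.volume_eq_prod, lintegral_prod_symm]
  · rw [← lintegral_indicator measurableSet_Ioo]
    refine lintegral_congr fun w => ?_
    rw [indicator_apply]
    split_ifs with hw
    · rw [← lintegral_indicator measurableSet_Ioo]
      refine lintegral_congr fun u => ?_
      simp only [indicator_apply, mem_Ioo, tri, mem_ofPred_eq]
      simp [hw.2]
    · have : ∀ u, tri.indicator (fun z => f z.1 z.2) (u, w) = 0 := by
        intro u
        simp only [mem_Ioo] at hw
        simp only [indicator_apply, tri, mem_ofPred_eq]
        rw [if_neg]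
        rintro ⟨h1, h2, h3⟩
        exact hw ⟨h1.trans h2, h3⟩
      simp [this]
  · exact (hf.indicator tri_meas).aemeasurable

noncomputable def integrand (p q : ℕ) (t : ℝ) (u : ℝ × ℝ) : ℝ :=
  (Real.log ((1 - u.1) / (1 - u.2)) + t * Real.log (u.2 / u.1)) ^ p *
            (Real.log (1 / u.2)) ^ q / ((1 - u.1) * u.2)

lemma logs_nonneg {u : ℝ × ℝ} (hu : u ∈ tri) : 0 ≤ Real.log ((1 - u.1) / (1 - u.2)) ∧
    0 ≤ Real.log (u.2 / u.1) ∧ 0 ≤ Real.log (1 / u.2) ∧ 0 < 1 - u.1 ∧ 0 < u.2 := by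
  obtain ⟨h1, h2, h3⟩ := hu
  refine ⟨Real.log_nonneg ?_, Real.log_nonneg ?_, Real.log_nonneg ?_, by linarith, by linarith⟩
  · rw [le_div_iff₀ (by linarith)]; linarith
  · rw [le_div_iff₀ (by linarith)]; linarith
  · rw [le_div_iff₀ (by linarith)]; linarith

lemma integrand_nonneg (p q : ℕ) {t : ℝ} (ht : 0 ≤ t) {u : ℝ × ℝ} (hu : u ∈ tri) :
    0 ≤ integrand p q t u := by
  obtain ⟨h1, h2, h3, h4, h5⟩ := logs_nonneg hu
  unfold integrand
  positivity

lemma integrand_meas (p q : ℕ) (t : ℝ) : Measurable (integrand p q t) := by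
  unfold integrand; fun_prop

lemma integrand_lint (p q : ℕ) {t : ℝ} (ht : 0 ≤ t) :
    ∫⁻ u in tri, ENNReal.ofReal (1 / ((p.factorial : ℝ) * q.factorial) * integrand p q t u) =
      ∑' n, ((opA (ENNReal.ofReal t))^[p] rr) n * rr n ^ (q+1) := by
  have e1 : ∀ u ∈ tri, ENNReal.ofReal (1 / ((p.factorial : ℝ) * q.factorial) * integrand p q t u)
      = ENNReal.ofReal (Real.log (1 / u.2) ^ q / q.factorial * (1 / u.2)) * (ENNReal.ofReal (1 / (1 - u.1)) * ENNReal.ofReal (phi t u.1 u.2 ^ p / p.factorial)) := by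
    intro u hu
    obtain ⟨h1, h2, h3, h4, h5⟩ := logs_nonneg hu
    rw [← ENNReal.ofReal_mul (by positivity), ← ENNReal.ofReal_mul (by positivity)]
    congr 1
    unfold integrand phi
    field_simp
  have hm := phi_meas t
  rw [setLIntegral_congr_fun tri_meas e1, tri_lint (fun a b => ENNReal.ofReal (Real.log (1 / b) ^ q / q.factorial * (1 / b)) * (ENNReal.ofReal (1 / (1 - a)) * ENNReal.ofReal (phi t a b ^ p / p.factorial)))]
  swap
  · simp only [Function.uncurry_def]; fun_prop
  set c := (opA (ENNReal.ofReal t))^[p] rr with hc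
  have e2 : ∀ v ∈ Ioo (0:ℝ) 1, ∫⁻ u in Ioo 0 v, ENNReal.ofReal (Real.log (1 / v) ^ q / q.factorial * (1 / v)) * (ENNReal.ofReal (1 / (1 - u)) * ENNReal.ofReal (phi t u v ^ p / p.factorial))
      = ∑' n, c n * (ENNReal.ofReal (v ^ (n - 1)) * ENNReal.ofReal (Real.log (1 / v) ^ q / q.factorial)) := by
    intro v hv
    have hL : 0 ≤ Real.log (1 / v) :=
      Real.log_nonneg (by rw [le_div_iff₀ hv.1]; linarith [hv.2])
    have hv0 := hv.1
    rw [lintegral_const_mul' _ _ (by simp), inner_series ht p v hv, ← ENNReal.tsum_mul_left]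
    refine tsum_congr fun n => ?_
    rcases Nat.eq_zero_or_pos n with rfl | h
    · simp [hc, c_zero]
    · rw [mul_left_comm, ← ENNReal.ofReal_mul (by positivity), ← ENNReal.ofReal_mul (by positivity)]
      congr 2
      obtain ⟨m, rfl⟩ : ∃ m, n = m + 1 := ⟨n - 1, by omega⟩
      simp only [Nat.add_sub_cancel]
      field_simp
      ring
  rw [setLIntegral_congr_fun measurableSet_Ioo e2, lintegral_tsum (fun k => by fun_prop)]
  refine tsum_congr fun n => ?_
  rcases Nat.eq_zero_or_pos n with rfl | h
  · simp [hc, c_zero]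
  rw [lintegral_const_mul _ (by fun_prop), log_int, Nat.sub_add_cancel h]

lemma integrand_integrable (p q : ℕ) {t : ℝ} (ht : 0 ≤ t) : IntegrableOn (integrand p q t) tri := by
  have h : IntegrableOn (fun u => 1 / ((p.factorial : ℝ) * q.factorial) * integrand p q t u) tri := by
    refine ⟨((integrand_meas p q t).const_mul _).aestronglyMeasurable, ?_⟩
    rw [hasFiniteIntegral_iff_ofReal, integrand_lint p q ht]
    · exact (total_fin _ (by simp) p q).lt_top
    · refine (ae_restrict_iff' tri_meas).2 (Filter.Eventually.of_forall fun u hu => ?_)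
      have := integrand_nonneg p q ht hu
      simp only [Pi.zero_apply]
      positivity
  have h2 := h.const_mul ((p.factorial : ℝ) * q.factorial)
  refine h2.congr (Filter.Eventually.of_forall fun u => ?_)
  simp only
  have : (p.factorial : ℝ) ≠ 0 := by positivity
  have : (q.factorial : ℝ) ≠ 0 := by positivity
  field_simp

lemma pos_case (p q : ℕ) {t : ℝ} (ht : 0 < t) :
    zetaT t (List.replicate p 1 ++ [q + 2]) =
      (1 / ((p.factorial : ℝ) * q.factorial)) * ∫ u in tri, integrand p q t u := by
  rw [zetaT_eq t ht, ← integrand_lint p q ht.le, ← integral_const_mul, integral_eq_lintegral_of_nonneg_ae]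
  · refine (ae_restrict_iff' tri_meas).2 (Filter.Eventually.of_forall fun u hu => ?_)
    have := integrand_nonneg p q ht.le hu
    simp only [Pi.zero_apply]
    positivity
  · exact ((integrand_meas p q t).const_mul _).aestronglyMeasurable

noncomputable def gg (p q j : ℕ) (u : ℝ × ℝ) : ℝ :=
  Real.log (u.2 / u.1) ^ j * Real.log ((1 - u.1) / (1 - u.2)) ^ (p - j) * (p.choose j) *
            (Real.log (1 / u.2)) ^ q / ((1 - u.1) * u.2)

lemma integrand_expand (p q : ℕ) (t : ℝ) (u : ℝ × ℝ) :
    integrand p q t u = ∑ j ∈ Finset.range (p+1), t ^ j * gg p q j u := by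
  unfold integrand gg
  rw [add_comm (Real.log _), add_pow, Finset.sum_mul, Finset.sum_div]
  refine Finset.sum_congr rfl fun j _ => ?_
  rw [mul_pow]
  ring

lemma gg_nonneg (p q j : ℕ) {u : ℝ × ℝ} (hu : u ∈ tri) : 0 ≤ gg p q j u := by
  obtain ⟨h1, h2, h3, h4, h5⟩ := logs_nonneg hu
  unfold gg
  positivity

lemma gg_int (p q j : ℕ) (hj : j ∈ Finset.range (p+1)) : IntegrableOn (gg p q j) tri := by
  refine (integrand_integrable p q zero_le_one).mono' ?_ ?_
  · have : Measurable (gg p q j) := by unfold gg; fun_prop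
    exact this.aestronglyMeasurable
  · refine (ae_restrict_iff' tri_meas).2 (Filter.Eventually.of_forall fun u hu => ?_)
    rw [Real.norm_of_nonneg (gg_nonneg p q j hu), integrand_expand]
    simp only [one_pow, one_mul]
    exact Finset.single_le_sum (f := fun j => gg p q j u) (fun i _ => gg_nonneg p q i hu) hj

lemma all_case (p q : ℕ) (t : ℝ) :
    zetaT t (List.replicate p 1 ++ [q + 2]) =
      (1 / ((p.factorial : ℝ) * q.factorial)) * ∫ u in tri, integrand p q t u := by
  classical
  set k := List.replicate p 1 ++ [q + 2]
  let P : Polynomial ℝ := ((fills k).map (fun k' =>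
    (Polynomial.X : Polynomial ℝ) ^ (k.length - k'.length) * Polynomial.C (mzvL k'))).sum
  let Q : Polynomial ℝ := Polynomial.C (1 / ((p.factorial : ℝ) * q.factorial)) *
    ∑ j ∈ Finset.range (p+1), Polynomial.X ^ j * Polynomial.C (∫ u in tri, gg p q j u)
  have hP : ∀ t, P.eval t = zetaT t k := by
    intro t
    simp only [P, zetaT]
    rw [← Polynomial.coe_evalRingHom, map_list_sum, List.map_map]
    congr 1
    refine List.map_congr_left fun k' _ => ?_
    simp only [Function.comp, Polynomial.coe_evalRingHom, Polynomial.eval_mul, Polynomial.eval_pow, Polynomial.eval_X, Polynomial.eval_C]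
  have hQ : ∀ t, Q.eval t = (1 / ((p.factorial : ℝ) * q.factorial)) * ∫ u in tri, integrand p q t u := by
    intro t
    simp only [Q, integrand_expand]
    rw [integral_finsetSum _ (fun j hj => (gg_int p q j hj).const_mul _)]
    simp only [Polynomial.eval_finsetSum, integral_const_mul, Polynomial.eval_mul, Polynomial.eval_pow, Polynomial.eval_X, Polynomial.eval_C]
  have : P = Q := by
    refine Polynomial.eq_of_infinite_eval_eq P Q ((Set.Ioi_infinite (0:ℝ)).mono fun t ht => ?_)
    simp only [mem_ofPred_eq]
    rw [hP, hQ]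
    exact pos_case p q ht
  rw [← hP, ← hQ, this]
end helpers2

theorem stmt10 (p q : ℕ) (t : ℝ) :
    zetaT t (List.replicate p 1 ++ [q + 2]) =
      (1 / ((Nat.factorial p : ℝ) * (Nat.factorial q : ℝ))) *
        ∫ u in {u : ℝ × ℝ | 0 < u.1 ∧ u.1 < u.2 ∧ u.2 < 1},
          (Real.log ((1 - u.1) / (1 - u.2)) + t * Real.log (u.2 / u.1)) ^ p *
            (Real.log (1 / u.2)) ^ q / ((1 - u.1) * u.2) := by
  exact all_case p q t
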